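/- (Star lemma for Theorem 4) Let G be a finite simple graph, f a monotone submodular set function on finite subsets of V(G), S a finite set of vertices, v a vertex, and ρ ≥ 1 a real number. If the marginal gain of v satisfies f_v(S) ≥ (1/ρ) · Σ_{w ∈ N_G(v)} f_w(S), then for every independent set I of G contained in the closed neighborhood N_G⁺(v) = {v} ∪ N_G(v), one has ρ · f_v(S) ≥ f(S ∪ I) − f(S). -/

import Mathlib

/-!
An independent subset of the closed neighborhood of `v` is either `{v}` or avoids `v`. In the first
case the bound is `f_v(S) ≤ ρ · f_v(S)`. In the second, submodularity bounds the gain of `I` by the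
sum of the gains of its elements, which is at most the sum over all neighbors of `v`.
-/

section Submodular

variable {α M : Type*} [DecidableEq α] [AddCommGroup M]

/-- The marginal gain `f_u(S)` of the element `u` with respect to the set `S`, in terms of which
submodularity is expressed. The case `u ∈ S` is allowed. -/
def marginalGain (f : Finset α → M) (S : Finset α) (u : α) : M :=
  f (insert u S) - f S

theorem marginalGain_of_mem (f : Finset α → M) {S : Finset α} {u : α} (hu : u ∈ S) :
    marginalGain f S u = 0 := by
  rw [marginalGain, Finset.insert_eq_of_mem hu, sub_self]

/-- Submodularity of a set function, in its diminishing-returns form: the marginal gain of an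
element outside a set does not increase when the set grows. -/
def IsSubmodular [LE M] (f : Finset α → M) : Prop :=
  ∀ S T : Finset α, ∀ u : α, S ⊆ T → u ∉ T → marginalGain f T u ≤ marginalGain f S u

theorem IsSubmodular.sub_le_sum_marginalGain [PartialOrder M] [IsOrderedAddMonoid M]
    {f : Finset α → M} (hf : IsSubmodular f) (S I : Finset α) :
    f (S ∪ I) - f S ≤ ∑ w ∈ I, marginalGain f S w := by
  induction I using Finset.induction_on with
  | empty => simp
  | insert a J haJ ih =>
    rw [Finset.sum_insert haJ, Finset.union_insert]
    by_cases haS : a ∈ S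
    · rwa [marginalGain_of_mem f haS, zero_add,
        Finset.insert_eq_of_mem (Finset.mem_union_left J haS)]
    · have diminishing : marginalGain f (S ∪ J) a ≤ marginalGain f S a :=
        hf S (S ∪ J) a Finset.subset_union_left (by simp [haS, haJ])
      calc f (insert a (S ∪ J)) - f S
          = marginalGain f (S ∪ J) a + (f (S ∪ J) - f S) := (sub_add_sub_cancel _ _ _).symm
        _ ≤ marginalGain f S a + ∑ w ∈ J, marginalGain f S w := add_le_add diminishing ih

end Submodular

section Star

variable {V : Type*} [DecidableEq V] {G : SimpleGraph V} {v : V} [Fintype (G.neighborSet v)]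

theorem eq_singleton_or_subset_neighborFinset_of_isIndepSet {I : Finset V}
    (hI : G.IsIndepSet I) (hIv : I ⊆ insert v (G.neighborFinset v)) :
    I = {v} ∨ I ⊆ G.neighborFinset v := by
  by_cases hv : v ∈ I
  · refine .inl (Finset.eq_singleton_iff_unique_mem.2 ⟨hv, fun w hw => ?_⟩)
    by_contra hwv
    have hadj : G.Adj v w :=
      (G.mem_neighborFinset v w).1 (Finset.mem_of_mem_insert_of_ne (hIv hw) hwv)
    exact hI hv hw (Ne.symm hwv) hadj
  · exact .inr ((Finset.subset_insert_iff_of_notMem hv).1 hIv)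

theorem star_lemma_general {K : Type*} [Field K] [LinearOrder K] [IsStrictOrderedRing K]
    {f : Finset V → K} (hf : IsSubmodular f) {S : Finset V} {ρ : K} (hρ : 1 ≤ ρ)
    (hgain : ∀ w ∈ insert v (G.neighborFinset v), 0 ≤ marginalGain f S w)
    (hloc : 1 / ρ * ∑ w ∈ G.neighborFinset v, marginalGain f S w ≤ marginalGain f S v)
    {I : Finset V} (hI : G.IsIndepSet I) (hIv : I ⊆ insert v (G.neighborFinset v)) :
    f (S ∪ I) - f S ≤ ρ * marginalGain f S v := by
  obtain rfl | hIN := eq_singleton_or_subset_neighborFinset_of_isIndepSet hI hIv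
  · rw [Finset.union_singleton]
    exact le_mul_of_one_le_left (hgain v (Finset.mem_insert_self _ _)) hρ
  · have hρ_pos : 0 < ρ := zero_lt_one.trans_le hρ
    calc f (S ∪ I) - f S
        ≤ ∑ w ∈ I, marginalGain f S w := hf.sub_le_sum_marginalGain S I
      _ ≤ ∑ w ∈ G.neighborFinset v, marginalGain f S w :=
          Finset.sum_le_sum_of_subset_of_nonneg hIN
            fun w hw _ => hgain w (Finset.mem_insert_of_mem hw)
      _ ≤ ρ * marginalGain f S v := by
          rwa [one_div, inv_mul_le_iff₀ hρ_pos] at hloc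

end Star

/-- Star lemma for Theorem 4: if the marginal gain of `v` satisfies the local
maximality condition `f_v(S) ≥ (1/ρ)·Σ_{w ∈ N(v)} f_w(S)` with `ρ ≥ 1`, then
for every independent set `I ⊆ N⁺(v) = {v} ∪ N(v)`,
`ρ · f_v(S) ≥ f(S ∪ I) − f(S)`. -/
theorem star_lemma {V : Type*} [Fintype V] [DecidableEq V]
    (G : SimpleGraph V) [DecidableRel G.Adj]
    (f : Finset V → ℝ)
    (hmono : ∀ S T : Finset V, S ⊆ T → f S ≤ f T)
    (hsub : ∀ S T : Finset V, ∀ u : V, S ⊆ T → u ∉ T →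
      f (insert u T) - f T ≤ f (insert u S) - f S)
    (S : Finset V) (v : V) (ρ : ℝ) (hρ : 1 ≤ ρ)
    (hloc : (1 / ρ) * ∑ w ∈ G.neighborFinset v, (f (insert w S) - f S) ≤
      f (insert v S) - f S) :
    ∀ I : Finset V, (∀ a ∈ I, ∀ b ∈ I, ¬ G.Adj a b) →
      I ⊆ insert v (G.neighborFinset v) →
      f (S ∪ I) - f S ≤ ρ * (f (insert v S) - f S) := by
  intro I hI hIv
  exact star_lemma_general hsub hρ
    (fun w _ => sub_nonneg.2 (hmono _ _ (Finset.subset_insert w S))) hloc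
    (fun a ha b hb _ => hI a ha b hb) hIv
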